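/- arXiv:1310.2206 — 2 statements merged into one kernel-verified Lean document; each statement's English description precedes it below -/
import Mathlib

section
/- Let 𝔖 = (Γ, P₀, P₁, 𝔅) be a group lifting structure and H ∈ SL(2, R). Then H has a group lifting factorization in 𝔖 (with no alternation or nonvanishing requirement on the lifting steps) if and only if H has a group lifting factorization in 𝔖 whose lifting cascade is irreducible; moreover the irreducible factorization can be chosen with the same gain factor K ∈ Γ and the same base matrix B ∈ 𝔅 as the given one. -/
open LaurentPolynomial Matrix

noncomputable section

abbrev R2 : Type := LaurentPolynomial ℂ
abbrev SL2 : Type := Matrix.SpecialLinearGroup (Fin 2) R2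

/-- Upper-triangular lifting matrix υ(S) = [[1, S],[0, 1]]. -/
def upl (S : R2) : SL2 := ⟨!![1, S; 0, 1], by simp [Matrix.det_fin_two_of]⟩

/-- Lower-triangular lifting matrix λ(S) = [[1, 0],[S, 1]]. -/
def lowl (S : R2) : SL2 := ⟨!![1, 0; S, 1], by simp [Matrix.det_fin_two_of]⟩
/-- Gain scaling matrix D_K = diag(1/K, K) as an element of SL(2, ℂ[z,z⁻¹]). -/
def gain (K : ℂˣ) : SL2 :=
  ⟨!![C ((K⁻¹ : ℂˣ) : ℂ), 0; 0, C (K : ℂ)], by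
    simp [Matrix.det_fin_two_of, ← _root_.map_mul, inv_mul_cancel₀ (Units.ne_zero K)]⟩
/-- The i-th lifting matrix of a cascade: υ(S) for update characteristic 0 (false,
lowpass), λ(S) for update characteristic 1 (true, highpass). -/
def liftMat (m : Bool) (S : R2) : SL2 := if m then lowl S else upl S

/-- Product of the first `n` steps of a lifting cascade:
`cascProd S m n = M_{n-1} ⋯ M_1 M_0` where `M_i = liftMat (m i) (S i)`. -/
def cascProd (S : ℕ → R2) (m : ℕ → Bool) : ℕ → SL2
  | 0 => 1
  | n + 1 => liftMat (m n) (S n) * cascProd S m n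

/-- A lifting cascade of length N is irreducible if all lifting filters are nonzero
and the update characteristics strictly alternate. -/
def IrredCasc (S : ℕ → R2) (m : ℕ → Bool) (N : ℕ) : Prop :=
  (∀ i < N, S i ≠ 0) ∧ ∀ i, i + 1 < N → m (i + 1) ≠ m i

/-- The lifting filters of the cascade belong to P₀ (lowpass updates) resp. P₁
(highpass updates). -/
def FiltersIn (P₀ P₁ : AddSubgroup R2) (S : ℕ → R2) (m : ℕ → Bool) (N : ℕ) : Prop :=
  ∀ i < N, (m i = false → S i ∈ P₀) ∧ (m i = true → S i ∈ P₁)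

theorem liftMat_zero (b : Bool) : liftMat b 0 = 1 := by
  apply Subtype.ext
  cases b <;> simp [liftMat, upl, lowl, Matrix.one_fin_two]

theorem liftMat_add (b : Bool) (s t : R2) : liftMat b s * liftMat b t = liftMat b (t + s) := by
  apply Subtype.ext
  change (liftMat b s).1 * (liftMat b t).1 = _
  cases b <;> simp [liftMat, upl, lowl, add_comm]

theorem cascProd_congr (S S' : ℕ → R2) (m m' : ℕ → Bool) (n : ℕ)
    (h : ∀ i < n, S i = S' i ∧ m i = m' i) : cascProd S m n = cascProd S' m' n := by
  induction n with
  | zero => rfl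
  | succ k ih =>
    simp only [cascProd]
    rw [ih (fun i hi => h i (by omega)), (h k (by omega)).1, (h k (by omega)).2]

/-- Appending (or overwriting) step `n` with an admissible nonzero step of the right type. -/
theorem append_step (P₀ P₁ : AddSubgroup R2) (n : ℕ) (S : ℕ → R2) (m : ℕ → Bool)
    (hF : FiltersIn P₀ P₁ S m n) (hI : IrredCasc S m n) (b : Bool) (s : R2) (hs : s ≠ 0)
    (hb : (b = false → s ∈ P₀) ∧ (b = true → s ∈ P₁))
    (halt : ∀ k, k + 1 = n → b ≠ m k) :
    ∃ (N : ℕ) (S' : ℕ → R2) (m' : ℕ → Bool), FiltersIn P₀ P₁ S' m' N ∧ IrredCasc S' m' N ∧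
      cascProd S' m' N = liftMat b s * cascProd S m n := by
  refine ⟨n + 1, Function.update S n s, Function.update m n b, ?_, ⟨?_, ?_⟩, ?_⟩
  · intro i hi
    by_cases h : i = n
    · subst h; simpa using hb
    · simpa [Function.update_of_ne h] using hF i (by omega)
  · intro i hi
    by_cases h : i = n
    · subst h; simpa using hs
    · simpa [Function.update_of_ne h] using hI.1 i (by omega)
  · intro i hi
    have h0 : i ≠ n := by omega
    by_cases h : i + 1 = n
    · rw [Function.update_of_ne h0, h, Function.update_self]
      exact halt i h
    · rw [Function.update_of_ne h0, Function.update_of_ne h]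
      exact hI.2 i (by omega)
  · simp only [cascProd, Function.update_self]
    congr 1
    apply cascProd_congr
    intro i hi
    have h0 : i ≠ n := by omega
    simp [Function.update_of_ne h0]

theorem irred_exists (P₀ P₁ : AddSubgroup R2) (n : ℕ) (S : ℕ → R2) (m : ℕ → Bool)
    (hF : FiltersIn P₀ P₁ S m n) :
    ∃ (N : ℕ) (S' : ℕ → R2) (m' : ℕ → Bool), FiltersIn P₀ P₁ S' m' N ∧ IrredCasc S' m' N ∧
      cascProd S' m' N = cascProd S m n := by
  induction n with
  | zero => exact ⟨0, S, m, hF, ⟨by simp, by simp⟩, rfl⟩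
  | succ n ih =>
    obtain ⟨N, S', m', hF', hI', hP⟩ := ih (fun i hi => hF i (by omega))
    have hb := hF n (by omega)
    simp only [cascProd]
    rw [← hP]
    generalize S n = s at *
    generalize m n = b at *
    by_cases hs : s = 0
    · exact ⟨N, S', m', hF', hI', by rw [hs, liftMat_zero, one_mul]⟩
    by_cases halt : ∀ k, k + 1 = N → b ≠ m' k
    · exact append_step P₀ P₁ N S' m' hF' hI' b s hs hb halt
    push Not at halt
    obtain ⟨k, rfl, rfl⟩ := halt
    have hFk : FiltersIn P₀ P₁ S' m' k := fun i hi => hF' i (by omega)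
    have hIk : IrredCasc S' m' k :=
      ⟨fun i hi => hI'.1 i (by omega), fun i hi => hI'.2 i (by omega)⟩
    have hk := hF' k (by omega)
    simp only [cascProd]
    rw [← mul_assoc, liftMat_add]
    by_cases ht : S' k + s = 0
    · exact ⟨k, S', m', hFk, hIk, by rw [ht, liftMat_zero, one_mul]⟩
    · refine append_step P₀ P₁ k S' m' hFk hIk (m' k) _ ht
        ⟨fun h => P₀.add_mem (hk.1 h) (hb.1 h), fun h => P₁.add_mem (hk.2 h) (hb.2 h)⟩ ?_
      rintro j rfl
      exact hI'.2 j (by omega)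

/-- H has a group lifting factorization in 𝔖 = (Γ, P₀, P₁, 𝔅) iff it has
one whose lifting cascade is irreducible; moreover the irreducible factorization can
be chosen with the same gain factor K and the same base matrix B. -/
theorem stmt5 (Γ : Subgroup ℂˣ) (P₀ P₁ : AddSubgroup R2) (𝔅 : Set SL2) (H : SL2) :
    ((∃ K ∈ Γ, ∃ B ∈ 𝔅, ∃ (N : ℕ) (S : ℕ → R2) (m : ℕ → Bool),
        FiltersIn P₀ P₁ S m N ∧ H = gain K * cascProd S m N * B) ↔
      (∃ K ∈ Γ, ∃ B ∈ 𝔅, ∃ (N : ℕ) (S : ℕ → R2) (m : ℕ → Bool),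
        FiltersIn P₀ P₁ S m N ∧ IrredCasc S m N ∧
          H = gain K * cascProd S m N * B)) ∧
    (∀ K ∈ Γ, ∀ B ∈ 𝔅,
      (∃ (N : ℕ) (S : ℕ → R2) (m : ℕ → Bool),
        FiltersIn P₀ P₁ S m N ∧ H = gain K * cascProd S m N * B) →
      (∃ (N : ℕ) (S : ℕ → R2) (m : ℕ → Bool),
        FiltersIn P₀ P₁ S m N ∧ IrredCasc S m N ∧
          H = gain K * cascProd S m N * B)) := by
  have key : ∀ K ∈ Γ, ∀ B ∈ 𝔅,
      (∃ (N : ℕ) (S : ℕ → R2) (m : ℕ → Bool),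
        FiltersIn P₀ P₁ S m N ∧ H = gain K * cascProd S m N * B) →
      (∃ (N : ℕ) (S : ℕ → R2) (m : ℕ → Bool),
        FiltersIn P₀ P₁ S m N ∧ IrredCasc S m N ∧
          H = gain K * cascProd S m N * B) := by
    rintro K - B - ⟨N, S, m, hF, hH⟩
    obtain ⟨N', S', m', hF', hI', hP⟩ := irred_exists P₀ P₁ N S m hF
    exact ⟨N', S', m', hF', hI', by rw [hP, hH]⟩
  refine ⟨⟨?_, ?_⟩, key⟩
  · rintro ⟨K, hK, B, hB, h⟩
    exact ⟨K, hK, B, hB, key K hK B hB h⟩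
  · rintro ⟨K, hK, B, hB, N, S, m, hF, -, hH⟩
    exact ⟨K, hK, B, hB, N, S, m, hF, hH⟩
end
end

section
/- The identity matrix admits a nontrivial irreducible lifting factorization of length 6 with linear-phase dyadic lifting filters; explicitly, in SL(2, ℂ[z,z⁻¹]): υ(−(z²/4)·(1 − z⁻¹)) · λ(−4·(1 + z⁻¹)) · υ((5/4)·(1 − z⁻¹)) · λ(−(1 + z⁻¹)) · υ(−z²·(1 − z⁻¹)) · λ(5·z⁻²·(1 + z⁻¹)) = I, where all six lifting filters are nonzero and the factors strictly alternate between upper- and lower-triangular lifting matrices. -/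
open LaurentPolynomial Matrix

noncomputable section

theorem matrix_aux {A : Type*} [CommRing A] (a b c d e f : A) (k1 : 1 + a * b = 1 + d * e)
    (k2 : (1 + a * b) * c + a = -e) (k3 : 1 + b * c = 1 + e * f)
    (k4 : b = -f - d * (1 + e * f)) :
    !![1, a; 0, 1] * !![1, 0; b, 1] * !![1, c; 0, 1] =
      !![1, 0; -f, 1] * !![1, -e; 0, 1] * !![1, 0; -d, 1] := by
  have j1 : 1 + a * b = 1 + -e * -d := by linear_combination k1
  have j2 : (1 + a * b) * c + a = -e := k2
  have j3 : b = -f + (-f * -e + 1) * -d := by linear_combination k4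
  have j4 : b * c + 1 = -f * -e + 1 := by linear_combination k3
  simp only [Matrix.mul_fin_two, mul_one, one_mul, mul_zero, zero_mul, add_zero, zero_add]
  rw [j4, j2, j1, ← j3]

theorem key_aux (a b c d e f : R2) (k1 : 1 + a * b = 1 + d * e)
    (k2 : (1 + a * b) * c + a = -e) (k3 : 1 + b * c = 1 + e * f)
    (k4 : b = -f - d * (1 + e * f)) :
    upl a * lowl b * upl c * lowl d * upl e * lowl f = 1 := by
  have e1 : upl a * lowl b * upl c = lowl (-f) * upl (-e) * lowl (-d) :=
    Subtype.ext (matrix_aux a b c d e f k1 k2 k3 k4)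
  have e2 : ∀ x : R2, lowl (-x) * lowl x = 1 := by
    intro x
    apply Subtype.ext
    change !![1, 0; -x, 1] * !![1, 0; x, 1] = (1 : Matrix (Fin 2) (Fin 2) R2)
    simp [Matrix.mul_fin_two, Matrix.one_fin_two]
  have e3 : ∀ x : R2, upl (-x) * upl x = 1 := by
    intro x
    apply Subtype.ext
    change !![1, -x; 0, 1] * !![1, x; 0, 1] = (1 : Matrix (Fin 2) (Fin 2) R2)
    simp [Matrix.mul_fin_two, Matrix.one_fin_two]
  rw [e1, mul_assoc _ (lowl (-d)), e2, mul_one, mul_assoc _ (upl (-e)), e3, mul_one, e2]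

theorem arith_aux {A : Type*} [CommRing A] (t w q : A) (hw : t * w = 1) (hq : 4 * q = 1) :
    (1 + -(q * (t * t) * (1 - w)) * (-4 * (1 + w)) = 1 + -(1 + w) * -(t * t * (1 - w))) ∧
    ((1 + -(q * (t * t) * (1 - w)) * (-4 * (1 + w))) * (5 * q * (1 - w)) +
      -(q * (t * t) * (1 - w)) = - -(t * t * (1 - w))) ∧
    (1 + -4 * (1 + w) * (5 * q * (1 - w)) =
      1 + -(t * t * (1 - w)) * (5 * (w * w) * (1 + w))) ∧
    (-4 * (1 + w) = -(5 * (w * w) * (1 + w)) -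
      -(1 + w) * (1 + -(t * t * (1 - w)) * (5 * (w * w) * (1 + w)))) := by
  refine ⟨?_, ?_, ?_, ?_⟩ <;> grind

/-- the identity of SL(2, ℂ[z,z⁻¹]) admits a nontrivial irreducible
length-6 lifting factorization with linear-phase dyadic lifting filters, strictly
alternating between upper- and lower-triangular lifting matrices:
υ(−(z²/4)(1−z⁻¹)) λ(−4(1+z⁻¹)) υ((5/4)(1−z⁻¹)) λ(−(1+z⁻¹)) υ(−z²(1−z⁻¹)) λ(5z⁻²(1+z⁻¹)) = I. -/
theorem stmt11 :
    let f₁ : R2 := -(C (4⁻¹ : ℂ) * T 2 * (1 - T (-1)))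
    let f₂ : R2 := C (-4 : ℂ) * (1 + T (-1))
    let f₃ : R2 := C ((5 : ℂ) / 4) * (1 - T (-1))
    let f₄ : R2 := -(1 + T (-1))
    let f₅ : R2 := -(T 2 * (1 - T (-1)))
    let f₆ : R2 := C (5 : ℂ) * T (-2) * (1 + T (-1))
    upl f₁ * lowl f₂ * upl f₃ * lowl f₄ * upl f₅ * lowl f₆ = 1 ∧
    (f₁ ≠ 0 ∧ f₂ ≠ 0 ∧ f₃ ≠ 0 ∧ f₄ ≠ 0 ∧ f₅ ≠ 0 ∧ f₆ ≠ 0) := by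
  have hw : (T 1 : R2) * T (-1) = 1 := by rw [← T_add]; simp
  have h2 : (T 2 : R2) = T 1 * T 1 := by rw [← T_add]; norm_num
  have h2' : (T (-2) : R2) = T (-1) * T (-1) := by rw [← T_add]; norm_num
  have hq : (4 : R2) * C (4⁻¹ : ℂ) = 1 := by
    rw [show (4 : R2) = C (4 : ℂ) from (map_ofNat C 4).symm, ← map_mul]; simp
  have c5 : C (5 : ℂ) = (5 : R2) := map_ofNat C 5
  have c4 : C (-4 : ℂ) = (-4 : R2) := by rw [map_neg, map_ofNat]
  have c54 : C ((5 : ℂ) / 4) = (5 : R2) * C (4⁻¹ : ℂ) := by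
    rw [div_eq_mul_inv, map_mul, c5]
  have hu : IsUnit (2 : ℂ) := by simp
  have hm : (1 - T (-1) : R2) ≠ 0 := by
    intro h
    have := congrArg (eval₂ (RingHom.id ℂ) (hu.unit)) h
    simp at this
    norm_num at this
  have hp : (1 + T (-1) : R2) ≠ 0 := by
    intro h
    have := congrArg (eval₂ (RingHom.id ℂ) (hu.unit)) h
    simp at this
    norm_num at this
  have hT : ∀ n : ℤ, (T n : R2) ≠ 0 := fun n => (isUnit_T n).ne_zero
  have hC : (C (4⁻¹ : ℂ) : R2) ≠ 0 := right_ne_zero_of_mul_eq_one hq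
  have h4 : (4 : R2) ≠ 0 := left_ne_zero_of_mul_eq_one hq
  have h5 : (5 : R2) ≠ 0 := by
    rw [← c5]
    intro h
    have := congrArg (eval₂ (RingHom.id ℂ) (hu.unit)) h
    rw [eval₂_C] at this
    simp at this
  intro f₁ f₂ f₃ f₄ f₅ f₆
  simp only [f₁, f₂, f₃, f₄, f₅, f₆, c5, c4, c54, h2, h2']
  refine ⟨?_, ?_, ?_, ?_, ?_, ?_, ?_⟩
  · generalize (T 1 : R2) = t at *
    generalize (T (-1) : R2) = w at *
    generalize (C (4⁻¹ : ℂ) : R2) = q at *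
    clear hm hp hT hC h4 h5 c5 c4 c54 h2 h2'
    obtain ⟨k1, k2, k3, k4⟩ := arith_aux t w q hw hq
    exact key_aux _ _ _ _ _ _ k1 k2 k3 k4
  on_goal 4 => exact neg_ne_zero.mpr hp
  all_goals simp [hm, hp, hT, hC, h4, h5]
end
end
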